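/- Consider a normal form game with nonempty player set N, strategy sets S_i and payoff functions u_i : ∏_j S_j → C_i with each C_i a linearly ordered set. Assume that for every i ∈ N: (1) S_i is a complete lattice; (2) for every s_{-i} ∈ S_{-i}, the section u_i(·, s_{-i}) : S_i → C_i is meet-superextremal; (3) u_i is modular-crossing relative to (S_i, S_{-i}); (4) for every s_{-i} ∈ S_{-i} and every t ∈ C_i, the set [u_i(·, s_{-i}) ≥ t] = {a ∈ S_i : u_i(a, s_{-i}) ≥ t}, with the order induced from S_i, is chain-complete downwards and, whenever nonempty, has a maximal element. Then the game admits a Nash equilibrium. -/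

import Mathlib

open Classical in
/-- Combine a strategy `a` of player `i` with a joint strategy `t` of the other players
into a joint strategy of all players. -/
noncomputable def combine {N : Type*} {S : N → Type*} (i : N) (a : S i)
    (t : ∀ j : {j : N // j ≠ i}, S j.1) : ∀ j, S j :=
  fun j => if h : j = i then cast (congrArg S h.symm) a else t ⟨j, h⟩

/-- A joint strategy `x` is a Nash equilibrium: no player `i` can improve the payoff
`u i x` by a unilateral deviation `y`. -/
def IsNashEquilibrium {N : Type*} {S : N → Type*} {C : N → Type*} [∀ i, LinearOrder (C i)]
    (u : ∀ i, (∀ j, S j) → C i) (x : ∀ j, S j) : Prop :=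
  ∀ i, ∀ y : S i, u i (combine i y (fun j => x j.1)) ≤ u i x

/-- `f` is meet-superextremal if for all `x, y`, either `f (x ⊓ y) ≥ f x` or
`f (x ⊔ y) ≥ f x ⊓ f y`. -/
def MeetSuperextremal {X C : Type*} [Lattice X] [LinearOrder C] (f : X → C) : Prop :=
  ∀ x y : X, f x ≤ f (x ⊓ y) ∨ f x ⊓ f y ≤ f (x ⊔ y)

/-- A subset `A` of a poset is chain-complete downwards if every nonempty chain
contained in `A` has a greatest lower bound within `A` (in the induced order). -/
def ChainCompleteDownwardsOn {X : Type*} [PartialOrder X] (A : Set X) : Prop :=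
  ∀ c : Set X, c ⊆ A → c.Nonempty → IsChain (· ≤ ·) c →
    ∃ m ∈ A, (∀ x ∈ c, m ≤ x) ∧ ∀ b ∈ A, (∀ x ∈ c, b ≤ x) → b ≤ m

/-- A subset `A` of a poset has a maximal element. -/
def HasMaximalOn {X : Type*} [PartialOrder X] (A : Set X) : Prop :=
  ∃ m ∈ A, ∀ x ∈ A, m ≤ x → x = m

/-! The proof selects best responses monotonically and takes a fixed point of the resulting
self-map of the joint strategies.

Selection: call a monotone map `g` into a complete lattice a lower barrier of a weakly ascending
family `A` if cutting each `A t` down to the elements above `g t` keeps it chain-complete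
downwards, with `g` staying below chosen maximal elements. Barriers are closed under suprema, so
there is a greatest one. The suprema of the minimal elements of the cut family form a barrier
again, so the greatest barrier already consists of minimal elements, and hence is a selection.

Maximizers: the superlevel sets of a meet-superextremal function form a weakly ascending nested
family. A minimal monotone selection from it is constant, for otherwise its infima taken inside
the successive levels would form a smaller selection; its value is a maximizer. -/

open Set

section ChainComplete

variable {X : Type*} [PartialOrder X] {A : Set X}

lemma ChainCompleteDownwardsOn.exists_isGreatest (hA : ChainCompleteDownwardsOn A) {c : Set X}
    (hcA : c ⊆ A) (hne : c.Nonempty) (hc : IsChain (· ≤ ·) c) :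
    ∃ m, IsGreatest (A ∩ lowerBounds c) m := by
  obtain ⟨m, hmA, hmc, hm⟩ := hA c hcA hne hc
  exact ⟨m, ⟨hmA, fun _ => hmc _⟩, fun b hb => hm b hb.1 fun _ hx => hb.2 hx⟩

lemma ChainCompleteDownwardsOn.exists_minimal (hA : ChainCompleteDownwardsOn A)
    (hne : A.Nonempty) : ∃ m, Minimal (· ∈ A) m := by
  obtain ⟨a, ha⟩ := hne
  obtain ⟨m, -, hm⟩ := zorn_le_nonempty₀ (α := Xᵒᵈ) (OrderDual.ofDual ⁻¹' A)
    (fun c hcA hc y hy => by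
      obtain ⟨m, hmA, hmc, -⟩ := hA (OrderDual.toDual ⁻¹' c) hcA ⟨y, hy⟩ hc.symm
      exact ⟨OrderDual.toDual m, hmA, hmc⟩) (OrderDual.toDual a) ha
  exact ⟨OrderDual.ofDual m, hm⟩

lemma HasMaximalOn.exists_maximal (hA : HasMaximalOn A) : ∃ m, Maximal (· ∈ A) m := by
  obtain ⟨m, hmA, hm⟩ := hA
  exact ⟨m, hmA, fun x hx hmx => (hm x hx hmx).le⟩

lemma ChainCompleteDownwardsOn.inter_Ici (hA : ChainCompleteDownwardsOn A) {b : X}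
    (hb : ∀ c ⊆ A ∩ Ici b, c.Nonempty → IsChain (· ≤ ·) c →
      ∀ n, IsGreatest (A ∩ lowerBounds c) n → b ≤ n) :
    ChainCompleteDownwardsOn (A ∩ Ici b) := by
  intro c hcA hne hc
  obtain ⟨n, hn⟩ := hA.exists_isGreatest (hcA.trans inter_subset_left) hne hc
  exact ⟨n, ⟨hn.1.1, hb c hcA hne hc n hn⟩, fun _ hx => hn.1.2 hx,
    fun k hk hkc => hn.2 ⟨hk.1, fun _ => hkc _⟩⟩

lemma ChainCompleteDownwardsOn.inter_Ici_of_isLUB (hA : ChainCompleteDownwardsOn A)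
    {s : Set X} (hs : ∀ a ∈ s, ChainCompleteDownwardsOn (A ∩ Ici a)) {b : X} (hb : IsLUB s b) :
    ChainCompleteDownwardsOn (A ∩ Ici b) := by
  refine hA.inter_Ici fun c hcA hne hc n hn => hb.2 fun a ha => ?_
  obtain ⟨k, ⟨⟨hkA, hak⟩, hkc⟩, -⟩ := (hs a ha).exists_isGreatest
    (fun x hx => ⟨(hcA hx).1, (hb.1 ha).trans (hcA hx).2⟩) hne hc
  exact le_trans hak (hn.2 ⟨hkA, hkc⟩)

end ChainComplete

section WeaklyAscending

variable {T X : Type*} [Preorder T]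

/-- A weakly ascending family of sets. This relaxes monotonicity in the strong set order, which
requires both memberships. -/
def WeaklyAscending [Lattice X] (A : T → Set X) : Prop :=
  ∀ ⦃s t⦄, s ≤ t → ∀ ⦃x⦄, x ∈ A s → ∀ ⦃y⦄, y ∈ A t → x ⊓ y ∈ A s ∨ x ⊔ y ∈ A t

namespace WeaklyAscending

variable [Lattice X] {A : T → Set X} {s t : T}

lemma inter_Ici (hA : WeaklyAscending A) (g : T →o X) :
    WeaklyAscending fun t => A t ∩ Ici (g t) := fun _ _ hst _ hx _ hy =>
  (hA hst hx.1 hy.1).imp (fun h => ⟨h, le_inf hx.2 ((g.mono hst).trans hy.2)⟩)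
    fun h => ⟨h, le_sup_of_le_right hy.2⟩

lemma le_or_sup_mem_of_minimal (hA : WeaklyAscending A) (hst : s ≤ t) {b y : X}
    (hb : Minimal (· ∈ A s) b) (hy : y ∈ A t) : b ≤ y ∨ b ⊔ y ∈ A t :=
  (hA hst hb.prop hy).imp_left fun hinf => (hb.le_of_le hinf inf_le_left).trans inf_le_right

lemma le_of_minimal_of_maximal (hA : WeaklyAscending A) (hst : s ≤ t) {b m : X}
    (hb : Minimal (· ∈ A s) b) (hm : Maximal (· ∈ A t) m) : b ≤ m :=
  (hA.le_or_sup_mem_of_minimal hst hb hm.prop).elim id fun hsup =>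
    le_sup_left.trans (hm.le_of_ge hsup le_sup_right)

lemma chainCompleteDownwardsOn_inter_Ici (hA : WeaklyAscending A) (hst : s ≤ t)
    (ht : ChainCompleteDownwardsOn (A t)) {b : X} (hb : Minimal (· ∈ A s) b) :
    ChainCompleteDownwardsOn (A t ∩ Ici b) := by
  refine ht.inter_Ici fun c hcA _ _ n hn => ?_
  rcases hA.le_or_sup_mem_of_minimal hst hb hn.1.1 with hbn | hsup
  · exact hbn
  · exact le_sup_left.trans (hn.2 ⟨hsup, fun x hx => sup_le (hcA hx).2 (hn.1.2 hx)⟩)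

end WeaklyAscending

/-- The monotone selections from a family of sets, as bundled monotone maps. -/
def monotoneSelections [Preorder X] (A : T → Set X) : Set (T →o X) :=
  {g | ∀ t, g t ∈ A t}

/-- The lower barriers of a family `A` below `m`: monotone maps `g ≤ m` such that cutting each
`A t` down to the elements above `g t` keeps it chain-complete downwards. For a weakly ascending
`A` the greatest of them is a selection. -/
def lowerBarriers [PartialOrder X] (A : T → Set X) (m : T → X) : Set (T →o X) :=
  {g | ∀ t, g t ≤ m t ∧ ChainCompleteDownwardsOn (A t ∩ Ici (g t))}

lemma mem_lowerBarriers_of_inter_Ici [PartialOrder X] {A : T → Set X} {m : T → X} {g h : T →o X}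
    (hgh : g ≤ h) (hh : h ∈ lowerBarriers (fun t => A t ∩ Ici (g t)) m) :
    h ∈ lowerBarriers A m := by
  intro t
  have hcut : A t ∩ Ici (g t) ∩ Ici (h t) = A t ∩ Ici (h t) := by
    rw [inter_assoc, inter_eq_right.2 (Ici_subset_Ici.2 (hgh t))]
  exact ⟨(hh t).1, hcut ▸ (hh t).2⟩

/-- The least monotone map above all minimal elements of the members of the family `A`. -/
def supMinimals [CompleteLattice X] (A : T → Set X) : T →o X where
  toFun t := sSup {b | ∃ s ≤ t, Minimal (· ∈ A s) b}
  monotone' := by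
    intro t t' htt'
    refine sSup_le_sSup ?_
    rintro b ⟨s, hst, hb⟩
    exact ⟨s, hst.trans htt', hb⟩

variable [CompleteLattice X] {A : T → Set X} {m : T → X}

lemma isLUB_supMinimals (A : T → Set X) (t : T) :
    IsLUB {b | ∃ s ≤ t, Minimal (· ∈ A s) b} (supMinimals A t) :=
  isLUB_sSup _

lemma le_supMinimals {t : T} {b : X} (hb : Minimal (· ∈ A t) b) : b ≤ supMinimals A t :=
  (isLUB_supMinimals A t).1 ⟨t, le_rfl, hb⟩

lemma sSup_mem_lowerBarriers (hcc : ∀ t, ChainCompleteDownwardsOn (A t)) {G : Set (T →o X)}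
    (hG : G ⊆ lowerBarriers A m) : sSup G ∈ lowerBarriers A m := by
  intro t
  have hlub : IsLUB ((fun g : T →o X => g t) '' G) (sSup G t) := by
    rw [OrderHom.sSup_apply]
    exact isLUB_biSup
  exact ⟨hlub.2 (forall_mem_image.2 fun _ hg => (hG hg t).1),
    (hcc t).inter_Ici_of_isLUB (forall_mem_image.2 fun _ hg => (hG hg t).2) hlub⟩

lemma WeaklyAscending.supMinimals_mem_lowerBarriers (hA : WeaklyAscending A)
    (hcc : ∀ t, ChainCompleteDownwardsOn (A t)) (hm : ∀ t, Maximal (· ∈ A t) (m t)) :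
    supMinimals A ∈ lowerBarriers A m := by
  refine fun t => ⟨(isLUB_supMinimals A t).2 ?_,
    (hcc t).inter_Ici_of_isLUB ?_ (isLUB_supMinimals A t)⟩
  · rintro b ⟨s, hst, hb⟩
    exact hA.le_of_minimal_of_maximal hst hb (hm t)
  · rintro b ⟨s, hst, hb⟩
    exact hA.chainCompleteDownwardsOn_inter_Ici hst (hcc t) hb

theorem WeaklyAscending.monotoneSelections_nonempty (hA : WeaklyAscending A)
    (hcc : ∀ t, ChainCompleteDownwardsOn (A t)) (hmax : ∀ t, HasMaximalOn (A t)) :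
    (monotoneSelections A).Nonempty := by
  choose m hm using fun t => (hmax t).exists_maximal
  set g := sSup (lowerBarriers A m)
  have hg : g ∈ lowerBarriers A m := sSup_mem_lowerBarriers hcc subset_rfl
  let B : T → Set X := fun t => A t ∩ Ici (g t)
  have hBm (t : T) : Maximal (· ∈ B t) (m t) :=
    (hm t).mono (fun _ => And.left) ⟨(hm t).prop, (hg t).1⟩
  have hmin (t : T) : ∃ b, Minimal (· ∈ B t) b := (hg t).2.exists_minimal ⟨m t, (hBm t).prop⟩
  have hgB : g ≤ supMinimals B := fun t =>
    let ⟨_, hb⟩ := hmin t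
    hb.prop.2.trans (le_supMinimals hb)
  have hBg : supMinimals B ≤ g := le_sSup <| mem_lowerBarriers_of_inter_Ici hgB <|
    (hA.inter_Ici g).supMinimals_mem_lowerBarriers (fun t => (hg t).2) hBm
  refine ⟨g, fun t => ?_⟩
  obtain ⟨b, hb⟩ := hmin t
  have hbg : b = g t := ((le_supMinimals hb).trans (hBg t)).antisymm hb.prop.2
  exact hbg ▸ hb.prop.1

end WeaklyAscending

section Maximizers

variable {T X : Type*}

lemma chainCompleteDownwardsOn_monotoneSelections [Preorder T] [PartialOrder X] {A : T → Set X}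
    (hmono : Monotone A) (hcc : ∀ t, ChainCompleteDownwardsOn (A t)) :
    ChainCompleteDownwardsOn (monotoneSelections A) := by
  intro c hcA hne hc
  have hchain (t : T) : IsChain (· ≤ ·) ((fun g : T →o X => g t) '' c) :=
    hc.image_of_map_rel _ _ _ fun _ _ hgh => hgh t
  choose n hn using fun t => (hcc t).exists_isGreatest
    (forall_mem_image.2 fun _ hg => hcA hg t) (hne.image _) (hchain t)
  have hnc {g : T →o X} (hg : g ∈ c) (t : T) : n t ≤ g t := (hn t).1.2 (mem_image_of_mem _ hg)
  have hn_mono : Monotone n := fun s t hst => (hn t).2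
    ⟨hmono hst (hn s).1.1, forall_mem_image.2 fun g hg => (hnc hg s).trans (g.mono hst)⟩
  exact ⟨⟨n, hn_mono⟩, fun t => (hn t).1.1, fun g hg => hnc hg, fun k hk hkc t =>
    (hn t).2 ⟨hk t, forall_mem_image.2 fun g hg => hkc g hg t⟩⟩

lemma apply_le_apply_of_minimal_monotoneSelections [LinearOrder T] [PartialOrder X]
    {A : T → Set X} (hmono : Monotone A) (hcc : ∀ t, ChainCompleteDownwardsOn (A t))
    {z : T →o X} (hz : Minimal (· ∈ monotoneSelections A) z) (s t : T) : z t ≤ z s := by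
  have hchain (t : T) : IsChain (· ≤ ·) (z '' Iic t) :=
    z.mono.isChain_range.mono (image_subset_range _ _)
  choose n hn using fun t => (hcc t).exists_isGreatest
    (forall_mem_image.2 fun s hs => hmono hs (hz.prop s)) (nonempty_Iic.image z) (hchain t)
  have hnz (t s : T) : n t ≤ z s := by
    rcases le_total s t with hst | hts
    · exact (hn t).1.2 (mem_image_of_mem z hst)
    · exact ((hn t).1.2 (mem_image_of_mem z self_mem_Iic)).trans (z.mono hts)
  have hn_mono : Monotone n := fun s t hst => (hn t).2
    ⟨hmono hst (hn s).1.1, forall_mem_image.2 fun r _ => hnz s r⟩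
  have hzn : z ≤ ⟨n, hn_mono⟩ := hz.le_of_le (fun t => (hn t).1.1) fun t => hnz t t
  exact (hzn t).trans (hnz t s)

theorem nonempty_iInter_of_monotoneSelections_nonempty [LinearOrder T] [Nonempty T]
    [PartialOrder X] {A : T → Set X} (hmono : Monotone A)
    (hcc : ∀ t, ChainCompleteDownwardsOn (A t)) (hne : (monotoneSelections A).Nonempty) :
    (⋂ t, A t).Nonempty := by
  obtain ⟨z, hz⟩ := (chainCompleteDownwardsOn_monotoneSelections hmono hcc).exists_minimal hne
  have hconst (s t : T) : z t = z s :=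
    (apply_le_apply_of_minimal_monotoneSelections hmono hcc hz s t).antisymm
      (apply_le_apply_of_minimal_monotoneSelections hmono hcc hz t s)
  inhabit T
  exact ⟨z default, mem_iInter.2 fun t => hconst default t ▸ hz.prop t⟩

variable {C : Type*}

/-- The set of global maximizers of a function; for the section of a payoff function, the set of
best responses. -/
def maximizers [LE C] (f : X → C) : Set X := {a | ∀ b, f b ≤ f a}

lemma maximizers_eq_superlevel [Preorder C] {f : X → C} {x : X} (hx : x ∈ maximizers f) :
    maximizers f = {a | f x ≤ f a} :=
  Subset.antisymm (fun _ ha => ha x) fun _ ha b => (hx b).trans ha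

/-- The modular-crossing condition on a function of two variables, a weak form of single crossing
in the pair of its arguments. -/
def ModularCrossing [LT X] [LT T] [LE C] (f : X → T → C) : Prop :=
  ∀ a a', a < a' → ∀ t t', t < t' → f a t ≤ f a' t → f a t' ≤ f a' t'

lemma ModularCrossing.le_of_le [PartialOrder X] [PartialOrder T] [Preorder C] {f : X → T → C}
    (hf : ModularCrossing f) {a a' : X} (ha : a ≤ a') {t t' : T} (ht : t ≤ t')
    (h : f a t ≤ f a' t) : f a t' ≤ f a' t' := by
  rcases ha.eq_or_lt with rfl | ha
  · exact le_rfl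
  rcases ht.eq_or_lt with rfl | ht
  · exact h
  · exact hf a a' ha t t' ht h

variable [LinearOrder C]

lemma MeetSuperextremal.weaklyAscending_superlevel [Preorder T] [Lattice X] {f : X → C}
    (hf : MeetSuperextremal f) {h : T → C} (hh : Antitone h) :
    WeaklyAscending fun t => {a | h t ≤ f a} := fun _ _ hst x hx y hy =>
  (hf x y).imp hx.trans (le_inf ((hh hst).trans hx) hy).trans

theorem MeetSuperextremal.maximizers_nonempty [CompleteLattice X] {f : X → C}
    (hf : MeetSuperextremal f) (hcc : ∀ b, ChainCompleteDownwardsOn {a | f b ≤ f a})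
    (hmax : ∀ b, HasMaximalOn {a | f b ≤ f a}) : (maximizers f).Nonempty := by
  let level (c : (range f)ᵒᵈ) : C := (OrderDual.ofDual c).1
  have hlevel : Antitone level := fun _ _ hcd => hcd
  have hmono : Monotone fun c => {a | level c ≤ f a} := fun _ _ hcd _ => (hlevel hcd).trans
  have hcc_level (c) : ChainCompleteDownwardsOn {a | level c ≤ f a} := by
    obtain ⟨_, b, rfl⟩ := c
    exact hcc b
  have hmax_level (c) : HasMaximalOn {a | level c ≤ f a} := by
    obtain ⟨_, b, rfl⟩ := c
    exact hmax b
  obtain ⟨x, hx⟩ := nonempty_iInter_of_monotoneSelections_nonempty hmono hcc_level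
    ((hf.weaklyAscending_superlevel hlevel).monotoneSelections_nonempty hcc_level hmax_level)
  exact ⟨x, fun b => mem_iInter.1 hx (OrderDual.toDual ⟨f b, mem_range_self b⟩)⟩

lemma ModularCrossing.weaklyAscending_maximizers [Lattice X] [PartialOrder T] {f : X → T → C}
    (hf : ModularCrossing f) (hsuper : ∀ t, MeetSuperextremal (f · t)) :
    WeaklyAscending fun t => maximizers (f · t) := by
  intro s t hst x hx y hy
  rcases hsuper s x y with hinf | hsup
  · exact .inl fun b => (hx b).trans hinf
  · have hys : f y s ≤ f (x ⊔ y) s := (le_inf (hx y) le_rfl).trans hsup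
    exact .inr fun b => (hy b).trans (hf.le_of_le le_sup_right hst hys)

theorem ModularCrossing.monotoneSelections_maximizers_nonempty [CompleteLattice X] [PartialOrder T]
    {f : X → T → C} (hf : ModularCrossing f) (hsuper : ∀ t, MeetSuperextremal (f · t))
    (hcc : ∀ t b, ChainCompleteDownwardsOn {a | f b t ≤ f a t})
    (hmax : ∀ t b, HasMaximalOn {a | f b t ≤ f a t}) :
    (monotoneSelections fun t => maximizers (f · t)).Nonempty := by
  choose x hx using fun t => (hsuper t).maximizers_nonempty (hcc t) (hmax t)
  have hlevel (t : T) : maximizers (f · t) = {a | f (x t) t ≤ f a t} :=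
    maximizers_eq_superlevel (hx t)
  exact (hf.weaklyAscending_maximizers hsuper).monotoneSelections_nonempty
    (fun t => hlevel t ▸ hcc t (x t)) fun t => hlevel t ▸ hmax t (x t)

end Maximizers

section Game

variable {N : Type*} {S : N → Type*}

lemma combine_self (i : N) (x : ∀ j, S j) : combine i (x i) (fun j => x j.1) = x := by
  funext j
  by_cases h : j = i
  · subst h
    simp [combine]
  · simp [combine, h]

variable [∀ i, CompleteLattice (S i)] {C : N → Type*} [∀ i, LinearOrder (C i)]

theorem exists_isNashEquilibrium_of_monotone_bestResponse {u : ∀ i, (∀ j, S j) → C i}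
    (h : ∀ i, (monotoneSelections fun t => maximizers fun a => u i (combine i a t)).Nonempty) :
    ∃ x, IsNashEquilibrium u x := by
  choose g hg using h
  let Φ : (∀ j, S j) →o ∀ j, S j :=
    ⟨fun x i => g i fun j => x j.1, fun _ _ hxy i => (g i).mono fun j => hxy j.1⟩
  refine ⟨Φ.lfp, fun i y => ?_⟩
  have hfix : g i (fun j => Φ.lfp j.1) = Φ.lfp i := congrFun Φ.map_lfp i
  simpa only [hfix, combine_self] using hg i (fun j => Φ.lfp j.1) y

end Game

/-- Theorem 4.5: a normal form game in which every strategy set is a complete lattice,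
every section of a payoff function is meet-superextremal, every payoff function is
modular-crossing, and every upper level set of a section is chain-complete downwards
with maximal elements when nonempty, admits a Nash equilibrium. -/
theorem exists_nashEquilibrium {N : Type*} [Nonempty N] {S : N → Type*}
    [∀ i, CompleteLattice (S i)] {C : N → Type*} [∀ i, LinearOrder (C i)]
    (u : ∀ i, (∀ j, S j) → C i)
    (hsuper : ∀ i, ∀ t : ∀ j : {j : N // j ≠ i}, S j.1,
      MeetSuperextremal (fun a : S i => u i (combine i a t)))
    (hmc : ∀ i, ∀ a a' : S i, a < a' → ∀ t t' : (∀ j : {j : N // j ≠ i}, S j.1), t < t' →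
      u i (combine i a t) ≤ u i (combine i a' t) →
      u i (combine i a t') ≤ u i (combine i a' t'))
    (hcc : ∀ i, ∀ t : ∀ j : {j : N // j ≠ i}, S j.1, ∀ c : C i,
      ChainCompleteDownwardsOn {a : S i | c ≤ u i (combine i a t)})
    (hmax : ∀ i, ∀ t : ∀ j : {j : N // j ≠ i}, S j.1, ∀ c : C i,
      ({a : S i | c ≤ u i (combine i a t)}).Nonempty →
        HasMaximalOn {a : S i | c ≤ u i (combine i a t)}) :
    ∃ x : ∀ j, S j, IsNashEquilibrium u x := by
  exact exists_isNashEquilibrium_of_monotone_bestResponse fun i =>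
    ModularCrossing.monotoneSelections_maximizers_nonempty (hmc i) (hsuper i) (fun t _ => hcc i t _)
      fun t b => hmax i t _ ⟨b, le_rfl⟩
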